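/- Let Ω be a symmetric oval. Then ψ_Ω(R) ∼ area(Ω)·R² as R → ∞; that is, ψ_Ω(R)/(area(Ω)·R²) → 1 as R → ∞. -/

import Mathlib

/-!
By symmetry, and because `Λ 0 = 0`, the sum `ψ_Ω(R)` is four times
`∑_{1 ≤ m ≤ R a} Λ(m) ψ(R f(m/R))`, where `ψ` is the Chebyshev function (`psi_eq_quadrantSum`).
Cut `[0, a]` into `N` equal pieces. Since `f` decreases, the sum over each piece lies between two
products of an increment of `ψ` and a value of `ψ` (`quadrantSum_step`), and the prime number theorem
`ψ(x) ∼ x` turns these, after division by `R²`, into the terms of the lower and upper Riemann sums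
of `f`. Letting `N → ∞` gives the limit `∫₀^a f` (`tendsto_quadrantSum`), a quarter of the area
(`area_eq`).

The prime number theorem is proved in the Wiener–Ikehara manner. Put `B(u) = ψ(e^u) e^{-u}`, which is
bounded by Chebyshev's estimate. The Laplace transform of `B - 1` is
`(-ζ'/ζ(s) - 1/(s-1)) / s - 1/s` at `s = 1 + σ + i t`, and this is continuous up to `σ = 0` by the
nonvanishing of `ζ` on `Re s = 1` (`exists_continuous_extension`). Integrating `B - 1` against a
translated Fejér kernel involves only a bounded segment of the line `Re s = 1`, and hence
tends to `0` by the Riemann–Lebesgue lemma (`tendsto_fejer_transform`). Since `ψ` is monotone and the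
kernel is nonnegative and concentrates at the origin, `B → 1` follows (`fejer_tauberian`).
-/

noncomputable section

open MeasureTheory Filter Set Pointwise Classical

/-- A symmetric oval: a compact convex planar domain, symmetric under reflections in the
coordinate axes, with smooth boundary of nowhere vanishing curvature. It is described by the
function `f` whose graph over `[-a,a]` is the top half of the boundary, together with the
inverse function `g` describing the right half of the boundary. -/
structure SymmetricOval where
  a : ℝ
  b : ℝ
  f : ℝ → ℝ
  g : ℝ → ℝ
  a_pos : 0 < a
  b_pos : 0 < b
  f_even : ∀ x, f (-x) = f x
  g_even : ∀ y, g (-y) = g y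
  f_zero : f 0 = b
  f_a : f a = 0
  f_cont : ContinuousOn f (Set.Icc (-a) a)
  g_cont : ContinuousOn g (Set.Icc (-b) b)
  f_smooth : ContDiffOn ℝ (⊤ : ℕ∞) f (Set.Ioo (-a) a)
  g_smooth : ContDiffOn ℝ (⊤ : ℕ∞) g (Set.Ioo (-b) b)
  f_anti : StrictAntiOn f (Set.Icc 0 a)
  f_conc : ∀ x ∈ Set.Ioo (-a) a, deriv (deriv f) x < 0
  g_conc : ∀ y ∈ Set.Ioo (-b) b, deriv (deriv g) y < 0
  g_inv_f : ∀ x ∈ Set.Icc 0 a, g (f x) = x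
  f_inv_g : ∀ y ∈ Set.Icc 0 b, f (g y) = y

namespace SymmetricOval

variable (O : SymmetricOval)

/-- The region `Ω ⊂ ℝ²` bounded by the oval. -/
def region : Set (ℝ × ℝ) := {p | |p.1| ≤ O.a ∧ |p.2| ≤ O.f |p.1|}

/-- The area of the oval. -/
def area : ℝ := (volume O.region).toReal

/-- `ψ_Ω(R) = Σ_{(m,n) ∈ ℤ² ∩ RΩ} Λ(|m|)Λ(|n|)`. -/
def psi (R : ℝ) : ℝ :=
  ∑' p : ℤ × ℤ,
    if ((p.1 : ℝ), (p.2 : ℝ)) ∈ R • O.region then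
      ArithmeticFunction.vonMangoldt p.1.natAbs * ArithmeticFunction.vonMangoldt p.2.natAbs
    else 0

/-- `π_Ω(R)`: the number of lattice points in `RΩ` both of whose coordinates are
(up to sign) prime. -/
def primeCount (R : ℝ) : ℕ :=
  Nat.card {p : ℤ × ℤ // ((p.1 : ℝ), (p.2 : ℝ)) ∈ R • O.region ∧
    p.1.natAbs.Prime ∧ p.2.natAbs.Prime}

/-- The Mellin transform `I₁(ρ) = ∫₀^a f(x) x^{ρ-1} dx`. -/
def I1 (ρ : ℂ) : ℂ := ∫ x in (0:ℝ)..O.a, (O.f x : ℂ) * (x : ℂ) ^ (ρ - 1)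

/-- The Mellin transform `I₂(ρ) = ∫₀^b g(y) y^{ρ-1} dy`. -/
def I2 (ρ : ℂ) : ℂ := ∫ y in (0:ℝ)..O.b, (O.g y : ℂ) * (y : ℂ) ^ (ρ - 1)

end SymmetricOval

/-- The set of nontrivial zeros of the Riemann zeta function. -/
def zetaZeros : Set ℂ := {ρ | riemannZeta ρ = 0 ∧ 0 < ρ.re ∧ ρ.re < 1}

namespace SymmetricOval

variable (O : SymmetricOval)

/-- `H̃_Ω(R) = -4 Σ_ρ R^{ρ-1/2} (I₁(ρ)+I₂(ρ))`, as a complex number. -/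
def HtildeC (R : ℝ) : ℂ :=
  -4 * ∑' ρ : zetaZeros, (R : ℂ) ^ ((ρ : ℂ) - 1/2) * (O.I1 ρ + O.I2 ρ)

/-- `H̃_Ω(R)`, which is real (under RH the sum is invariant under conjugation). -/
def Htilde (R : ℝ) : ℝ := (O.HtildeC R).re

end SymmetricOval


/-! ### The Fejér kernel -/

/-- The Fejér kernel `(1 - cos(l v)) / (l v²)` with frequencies in `[-l, l]`, whose mass does not
depend on `l`. It takes the junk value `0` instead of `l / 2` at `v = 0`, which is harmless under
an integral. -/
def fejer (l v : ℝ) : ℝ := (1 - Real.cos (l * v)) / (l * v ^ 2)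

lemma fejer_nonneg {l : ℝ} (hl : 0 < l) (v : ℝ) : 0 ≤ fejer l v :=
  div_nonneg (sub_nonneg.2 (Real.cos_le_one _)) (by positivity)

lemma measurable_fejer (l : ℝ) : Measurable (fejer l) := by
  unfold fejer; fun_prop

lemma fejer_mul_sq_le {l : ℝ} (hl : 0 < l) (v : ℝ) : fejer l v * v ^ 2 ≤ 2 / l := by
  unfold fejer
  rcases eq_or_ne v 0 with rfl | hv
  · simp; positivity
  · rw [div_mul_eq_mul_div, mul_div_mul_right _ _ (by positivity)]
    gcongr
    linarith [Real.neg_one_le_cos (l * v)]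

lemma fejer_le {l : ℝ} (hl : 0 < l) (v : ℝ) : fejer l v ≤ l / 2 := by
  unfold fejer
  rcases eq_or_ne v 0 with rfl | hv
  · simp; positivity
  · rw [div_le_iff₀ (by positivity)]
    have := Real.one_sub_sq_div_two_le_cos (x := l * v)
    nlinarith

lemma fejer_le_inv {l : ℝ} (hl : 0 < l) (v : ℝ) :
    fejer l v ≤ (l / 2 + 2 / l) * (1 + v ^ 2)⁻¹ := by
  rw [← div_eq_mul_inv, le_div_iff₀ (by positivity)]
  linarith [fejer_mul_sq_le hl v, fejer_le hl v]

lemma integrable_fejer {l : ℝ} (hl : 0 < l) : Integrable (fejer l) := by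
  refine (integrable_inv_one_add_sq.const_mul (l / 2 + 2 / l)).mono'
    (measurable_fejer l).aestronglyMeasurable (Eventually.of_forall fun v => ?_)
  rw [Real.norm_of_nonneg (fejer_nonneg hl v)]
  exact fejer_le_inv hl v

lemma integral_fejer {l : ℝ} (hl : 0 < l) : ∫ v, fejer l v = ∫ v, fejer 1 v := by
  have h : ∀ v, fejer l v = l * fejer 1 (l * v) := by
    intro v
    unfold fejer
    rcases eq_or_ne v 0 with rfl | hv
    · simp
    · field_simp
  simp_rw [h]
  rw [integral_const_mul, Measure.integral_comp_mul_left, abs_of_pos (inv_pos.2 hl), smul_eq_mul,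
    mul_inv_cancel_left₀ hl.ne']

lemma integral_fejer_pos : 0 < ∫ v, fejer 1 v := by
  rw [integral_pos_iff_support_of_nonneg (fejer_nonneg one_pos) (integrable_fejer one_pos)]
  refine lt_of_lt_of_le (b := volume (Ioo (0:ℝ) 1)) (by simp) (measure_mono fun v hv => ?_)
  have : Real.cos v < 1 := by
    have := Real.cos_lt_cos_of_nonneg_of_le_pi le_rfl
      (hv.2.le.trans (by linarith [Real.pi_gt_three])) hv.1
    simpa using this
  simp only [Function.mem_support, fejer, one_mul]
  have h0 := hv.1
  have : 0 < 1 - Real.cos v := by linarith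
  positivity

/-- The kernel is the cosine transform of the triangle function `1 - t / l` on `[0, l]`. -/
lemma fejer_eq_integral {l : ℝ} (hl : 0 < l) {v : ℝ} (hv : v ≠ 0) :
    ∫ t in (0:ℝ)..l, (1 - t / l) * Real.cos (t * v) = fejer l v := by
  have hd : ∀ t ∈ uIcc 0 l, HasDerivAt
      (fun t => (1 - t / l) * (Real.sin (t * v) / v) - Real.cos (t * v) / (l * v ^ 2))
      ((1 - t / l) * Real.cos (t * v)) t := by
    intro t _
    have h1 : HasDerivAt (fun t : ℝ => t * v) v t := by simpa using (hasDerivAt_id t).mul_const v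
    have h2 : HasDerivAt (fun t : ℝ => 1 - t / l) (-(1 / l)) t := by
      simpa using ((hasDerivAt_id t).div_const l).const_sub 1
    have h3 := (h2.mul (h1.sin.div_const v)).sub (h1.cos.div_const (l * v ^ 2))
    refine h3.congr_deriv ?_
    field_simp
    ring
  rw [intervalIntegral.integral_eq_sub_of_hasDerivAt hd
    (Continuous.intervalIntegrable (by fun_prop) _ _)]
  unfold fejer
  field_simp
  simp
  ring

/-- As `l` grows with `d` fixed, the kernel concentrates on `[-d, d]`. -/
lemma integral_fejer_tail {l d : ℝ} (hl : 0 < l) (hd : 0 < d) :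
    ∫ v in {v | d < |v|}, fejer l v ≤ 4 / (l * d) := by
  have hs : {v : ℝ | d < |v|} = Iio (-d) ∪ Ioi d := by
    ext v; simp only [mem_ofPred_eq, mem_union, mem_Iio, mem_Ioi, lt_abs]
    constructor <;> rintro (h | h)
    · exact .inr h
    · left; linarith
    · right; linarith
    · exact .inl h
  have heven : ∀ v, fejer l (-v) = fejer l v := by intro v; simp [fejer]
  have h1 : ∫ v in Ioi d, fejer l v ≤ 2 / (l * d) := by
    have hi : IntegrableOn (fun v : ℝ => 2 / l * v ^ (-2 : ℝ)) (Ioi d) :=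
      (integrableOn_Ioi_rpow_of_lt (by norm_num) hd).const_mul _
    calc _ ≤ ∫ v in Ioi d, 2 / l * v ^ (-2 : ℝ) := by
          refine setIntegral_mono_on (integrable_fejer hl).integrableOn hi measurableSet_Ioi ?_
          intro v hv
          have hv0 : 0 < v := hd.trans hv
          rw [Real.rpow_neg hv0.le, Real.rpow_two, ← div_eq_mul_inv, le_div_iff₀ (by positivity)]
          exact fejer_mul_sq_le hl v
      _ = _ := by
          rw [integral_const_mul, integral_Ioi_rpow_of_lt (by norm_num) hd]
          norm_num
          rw [Real.rpow_neg_one]; field_simp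
  have h2 : ∫ v in Iio (-d), fejer l v = ∫ v in Ioi d, fejer l v := by
    rw [← integral_Iic_eq_integral_Iio, ← integral_comp_neg_Ioi]
    simp [heven]
  rw [hs, setIntegral_union (by
    rw [Set.disjoint_left]; intro v hv hv'; simp only [mem_Iio, mem_Ioi] at hv hv'; linarith)
    measurableSet_Ioi (integrable_fejer hl).integrableOn (integrable_fejer hl).integrableOn, h2]
  have : 4 / (l * d) = 2 / (l * d) + 2 / (l * d) := by ring
  linarith

/-! ### Laplace transforms against the Fejér kernel -/

/-- If `G(1 + σ + i t)` is the Laplace transform of `h` for `σ > 0`, then smoothing `h(u) e^{-σ u}`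
by the Fejér kernel only sees `G` on a bounded segment of the line `Re s = 1 + σ`; this is Fubini's
theorem applied to the integral representation of the kernel. -/
lemma fejer_transform_pos {h : ℝ → ℝ} (hm : Measurable h) {M : ℝ} (hM : ∀ u, |h u| ≤ M)
    {G : ℂ → ℂ}
    (hG : ∀ σ t : ℝ, 0 < σ →
      ∫ u in Ioi (0:ℝ), (h u : ℂ) * Complex.exp (-(σ + t * Complex.I) * u)
        = G (1 + σ + t * Complex.I))
    {l : ℝ} (hl : 0 < l) (x : ℝ) {σ : ℝ} (hσ : 0 < σ) :
    ∫ u in Ioi (0:ℝ), h u * Real.exp (-σ * u) * fejer l (u - x) =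
    ∫ t in (0:ℝ)..l, (1 - t / l) *
      (Complex.exp (t * x * Complex.I) * G (1 + σ + t * Complex.I)).re := by
  have hexp : IntegrableOn (fun u : ℝ => Real.exp (-σ * u)) (Ioi 0) :=
    integrableOn_exp_mul_Ioi (by linarith) 0
  have hM0 : 0 ≤ M := (abs_nonneg _).trans (hM 0)
  have hre : ∀ t : ℝ, (Complex.exp (t * x * Complex.I) * G (1 + σ + t * Complex.I)).re =
      ∫ u in Ioi (0:ℝ), h u * Real.exp (-σ * u) * Real.cos (t * (u - x)) := by
    intro t
    rw [← hG σ t hσ, ← integral_const_mul]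
    have hpt : ∀ u : ℝ, Complex.exp (t * x * Complex.I) *
        ((h u : ℂ) * Complex.exp (-(σ + t * Complex.I) * u)) =
        (h u * Real.exp (-σ * u) : ℝ) * Complex.exp ((-(t * (u - x)) : ℝ) * Complex.I) := by
      intro u
      push_cast
      have : Complex.exp (-σ * u) * Complex.exp (-(t * (u - x)) * Complex.I) =
        Complex.exp (t * x * Complex.I) * Complex.exp (-(σ + t * Complex.I) * u) := by
        rw [← Complex.exp_add, ← Complex.exp_add]; congr 1; ring
      linear_combination -(h u : ℂ) * this
    simp_rw [hpt]
    have hint : Integrable (fun u : ℝ => ((h u * Real.exp (-σ * u) : ℝ) : ℂ) *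
        Complex.exp ((-(t * (u - x)) : ℝ) * Complex.I)) (volume.restrict (Ioi 0)) := by
      refine (hexp.const_mul M).mono' (by fun_prop) (Eventually.of_forall fun u => ?_)
      rw [norm_mul, Complex.norm_exp_ofReal_mul_I, mul_one, Complex.norm_real, norm_mul,
        Real.norm_eq_abs, Real.norm_of_nonneg (Real.exp_pos _).le]
      gcongr
      exact hM u
    have := integral_re hint
    simp only [RCLike.re_to_complex] at this
    rw [← this]
    refine integral_congr_ae (Eventually.of_forall fun u => ?_)
    simp only
    rw [Complex.re_ofReal_mul, Complex.exp_ofReal_mul_I_re, Real.cos_neg]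
  simp_rw [hre]
  rw [intervalIntegral.integral_of_le hl.le]
  simp_rw [← integral_const_mul]
  rw [integral_integral_swap]
  · refine integral_congr_ae ?_
    have : ∀ᵐ u : ℝ ∂(volume.restrict (Ioi 0)), u ≠ x :=
      ae_restrict_of_ae (by simp [ae_iff])
    filter_upwards [this] with u hu
    rw [← fejer_eq_integral hl (sub_ne_zero.2 hu), intervalIntegral.integral_of_le hl.le,
      ← integral_const_mul]
    congr 1
    ext t
    ring
  · have h1 : Integrable (fun p : ℝ × ℝ => 1 * (M * Real.exp (-σ * p.2)))
        ((volume.restrict (Ioc 0 l)).prod (volume.restrict (Ioi 0))) :=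
      Integrable.mul_prod (f := fun _ : ℝ => (1:ℝ)) (integrable_const _) (hexp.const_mul M)
    have hmem : ∀ᵐ p : ℝ × ℝ ∂((volume.restrict (Ioc 0 l)).prod (volume.restrict (Ioi 0))),
        p.1 ∈ Ioc 0 l := by
      rw [Measure.prod_restrict]
      filter_upwards [ae_restrict_mem (measurableSet_Ioc.prod measurableSet_Ioi)] with p hp
      exact hp.1
    refine h1.mono' (Measurable.aestronglyMeasurable (by unfold Function.uncurry; fun_prop)) ?_
    filter_upwards [hmem] with p hp
    simp only [Function.uncurry]
    rw [norm_mul, norm_mul, norm_mul, Real.norm_of_nonneg (Real.exp_pos _).le]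
    have a1 : ‖1 - p.1 / l‖ ≤ 1 := by
      have := div_le_one_of_le₀ hp.2 hl.le
      have := div_nonneg hp.1.le hl.le
      rw [Real.norm_eq_abs, abs_le]; constructor <;> linarith
    have a2 : ‖Real.cos (p.1 * (p.2 - x))‖ ≤ 1 := Real.abs_cos_le_one _
    calc _ ≤ 1 * (M * Real.exp (-σ * p.2) * 1) := by
          gcongr
          exact hM _
      _ = _ := by ring

/-- When `G` extends continuously to the line `Re s = 1`, the identity of
`fejer_transform_pos` persists at `σ = 0`, by dominated convergence on both sides. -/
lemma fejer_transform_zero {h : ℝ → ℝ} (hm : Measurable h) {M : ℝ} (hM : ∀ u, |h u| ≤ M)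
    {G : ℂ → ℂ} (hGc : ContinuousOn G {s | 1 ≤ s.re})
    (hG : ∀ σ t : ℝ, 0 < σ →
      ∫ u in Ioi (0:ℝ), (h u : ℂ) * Complex.exp (-(σ + t * Complex.I) * u)
        = G (1 + σ + t * Complex.I))
    {l : ℝ} (hl : 0 < l) (x : ℝ) :
    ∫ u in Ioi (0:ℝ), h u * fejer l (u - x) =
    ∫ t in (0:ℝ)..l, (1 - t / l) *
      (Complex.exp (t * x * Complex.I) * G (1 + t * Complex.I)).re := by
  have hM0 : 0 ≤ M := (abs_nonneg _).trans (hM 0)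
  have hnhds : ∀ᶠ σ : ℝ in nhdsWithin 0 (Ioi 0), 0 < σ ∧ σ ≤ 1 := by
    filter_upwards [Ioc_mem_nhdsGT (zero_lt_one (α := ℝ))] with σ hσ using hσ
  have hL : Tendsto (fun σ : ℝ => ∫ u in Ioi (0:ℝ), h u * Real.exp (-σ * u) * fejer l (u - x))
      (nhdsWithin 0 (Ioi 0)) (nhds (∫ u in Ioi (0:ℝ), h u * fejer l (u - x))) := by
    refine tendsto_integral_filter_of_dominated_convergence (fun u => M * fejer l (u - x)) ?_ ?_ ?_ ?_
    · refine Eventually.of_forall fun σ => Measurable.aestronglyMeasurable ?_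
      have := measurable_fejer l
      fun_prop
    · filter_upwards [hnhds] with σ hσ
      filter_upwards [ae_restrict_mem measurableSet_Ioi] with u hu
      have hu : 0 < u := hu
      rw [norm_mul, norm_mul, Real.norm_of_nonneg (fejer_nonneg hl _),
        Real.norm_of_nonneg (Real.exp_pos _).le]
      have : Real.exp (-σ * u) ≤ 1 := Real.exp_le_one_iff.2 (by nlinarith [hσ.1])
      have h3 := fejer_nonneg hl (u - x)
      calc _ ≤ M * 1 * fejer l (u - x) := by
            gcongr
            exact hM u
        _ = _ := by ring
    · exact (((integrable_fejer hl).comp_sub_right x).const_mul M).integrableOn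
    · refine Eventually.of_forall fun u => ?_
      have : Continuous (fun σ : ℝ => h u * Real.exp (-σ * u) * fejer l (u - x)) := by fun_prop
      have h2 := this.tendsto 0
      simp only [neg_zero, zero_mul, Real.exp_zero, mul_one] at h2
      exact h2.mono_left nhdsWithin_le_nhds
  -- Near `σ = 0` the continuous function `G` is bounded on a compact rectangle.
  have hR : Tendsto (fun σ : ℝ => ∫ t in (0:ℝ)..l, (1 - t / l) *
      (Complex.exp (t * x * Complex.I) * G (1 + σ + t * Complex.I)).re)
      (nhdsWithin 0 (Ioi 0)) (nhds (∫ t in (0:ℝ)..l, (1 - t / l) *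
      (Complex.exp (t * x * Complex.I) * G (1 + t * Complex.I)).re)) := by
    have hc : ContinuousOn (fun p : ℝ × ℝ => G (1 + p.1 + p.2 * Complex.I))
        (Icc 0 1 ×ˢ Icc 0 l) := by
      refine hGc.comp (by fun_prop) ?_
      intro p hp
      simpa using hp.1.1
    obtain ⟨C, hC⟩ := (isCompact_Icc.prod isCompact_Icc).exists_bound_of_continuousOn hc
    have hsl : ∀ σ : ℝ, 0 ≤ σ → ContinuousOn (fun t : ℝ => (1 - t / l) *
        (Complex.exp (t * x * Complex.I) * G (1 + σ + t * Complex.I)).re) univ := by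
      intro σ hσ
      have : ContinuousOn (fun t : ℝ => G (1 + σ + t * Complex.I)) univ := by
        refine hGc.comp (by fun_prop) ?_
        intro t _
        simpa using hσ
      refine ContinuousOn.mul (by fun_prop) (Complex.continuous_re.comp_continuousOn ?_)
      exact ContinuousOn.mul (by fun_prop) this
    refine intervalIntegral.tendsto_integral_filter_of_dominated_convergence (fun _ => C) ?_ ?_ ?_ ?_
    · filter_upwards [hnhds] with σ hσ
      exact (continuousOn_univ.1 (hsl σ hσ.1.le)).aestronglyMeasurable
    · filter_upwards [hnhds] with σ hσ
      refine Eventually.of_forall fun t ht => ?_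
      rw [uIoc_of_le hl.le] at ht
      have a1 : ‖1 - t / l‖ ≤ 1 := by
        have := div_le_one_of_le₀ ht.2 hl.le
        have := div_nonneg ht.1.le hl.le
        rw [Real.norm_eq_abs, abs_le]; constructor <;> linarith
      have a2 : ‖(Complex.exp (t * x * Complex.I) * G (1 + σ + t * Complex.I)).re‖ ≤ C := by
        refine (Complex.abs_re_le_norm _).trans ?_
        rw [norm_mul]
        have : ‖Complex.exp (t * x * Complex.I)‖ = 1 := by
          exact_mod_cast Complex.norm_exp_ofReal_mul_I (t * x)
        rw [this, one_mul]
        exact hC (σ, t) ⟨⟨hσ.1.le, hσ.2⟩, ⟨ht.1.le, ht.2⟩⟩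
      rw [norm_mul]
      calc _ ≤ 1 * C := by gcongr
        _ = C := one_mul C
    · simp
    · refine Eventually.of_forall fun t ht => ?_
      have hg : Tendsto (fun σ : ℝ => G (1 + σ + t * Complex.I)) (nhdsWithin 0 (Ioi 0))
          (nhds (G (1 + t * Complex.I))) := by
        have h1 := hGc (1 + t * Complex.I) (by simp)
        refine h1.tendsto.comp (tendsto_nhdsWithin_iff.2 ⟨?_, ?_⟩)
        · have : Continuous (fun σ : ℝ => (1 + σ + t * Complex.I : ℂ)) := by fun_prop
          have h2 := this.tendsto 0
          simp only [Complex.ofReal_zero, add_zero] at h2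
          exact h2.mono_left nhdsWithin_le_nhds
        · filter_upwards [hnhds] with σ hσ
          simpa using hσ.1.le
      exact ((Complex.continuous_re.tendsto _).comp (hg.const_mul _)).const_mul _
  refine tendsto_nhds_unique hL (hR.congr' ?_)
  filter_upwards [hnhds] with σ hσ
  exact (fejer_transform_pos hm hM hG hl x hσ.1).symm

/-- By the Riemann–Lebesgue lemma, the Fejér means of `h` around `x` tend to `0` as `x → ∞`. -/
lemma tendsto_fejer_transform {h : ℝ → ℝ} (hm : Measurable h) {M : ℝ} (hM : ∀ u, |h u| ≤ M)
    {G : ℂ → ℂ} (hGc : ContinuousOn G {s | 1 ≤ s.re})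
    (hG : ∀ σ t : ℝ, 0 < σ →
      ∫ u in Ioi (0:ℝ), (h u : ℂ) * Complex.exp (-(σ + t * Complex.I) * u)
        = G (1 + σ + t * Complex.I))
    {l : ℝ} (hl : 0 < l) :
    Tendsto (fun x => ∫ u in Ioi (0:ℝ), h u * fejer l (u - x)) atTop (nhds 0) := by
  simp_rw [fejer_transform_zero hm hM hGc hG hl]
  have hgc : Continuous (fun t : ℝ => ((1 - t / l : ℝ) : ℂ) * G (1 + t * Complex.I)) := by
    refine Continuous.mul (by fun_prop) (continuousOn_univ.1 (hGc.comp (by fun_prop) ?_))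
    intro t _
    simp
  set k : ℝ → ℂ := (Ioc 0 l).indicator
    (fun t : ℝ => ((1 - t / l : ℝ) : ℂ) * G (1 + t * Complex.I)) with hk
  have hRL := Real.tendsto_integral_exp_smul_cocompact k
  -- The frequency producing the phase `e^{i t x}` in the normalisation of `Real.fourierChar`.
  have hx : Tendsto (fun x : ℝ => -(x / (2 * Real.pi))) atTop (cocompact ℝ) := by
    refine Tendsto.mono_right ?_ atBot_le_cocompact
    exact tendsto_neg_atTop_atBot.comp (tendsto_id.atTop_div_const (by positivity))
  have h2 := (Complex.continuous_re.tendsto _).comp (hRL.comp hx)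
  rw [Complex.zero_re] at h2
  refine h2.congr fun x => ?_
  simp only [Function.comp]
  have e1 : ∀ t : ℝ, Real.fourierChar (-(t * -(x / (2 * Real.pi)))) • k t =
      (Ioc 0 l).indicator (fun t : ℝ => ((1 - t / l : ℝ) : ℂ) *
        (Complex.exp (t * x * Complex.I) * G (1 + t * Complex.I))) t := by
    intro t
    rw [hk]
    by_cases ht : t ∈ Ioc 0 l
    · rw [indicator_of_mem ht, indicator_of_mem ht, Circle.smul_def, Real.fourierChar_apply,
        smul_eq_mul]
      have : ((2 * Real.pi * -(t * -(x / (2 * Real.pi))) : ℝ) : ℂ) = t * x := by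
        rw [← Complex.ofReal_mul]; congr 1; field_simp
      rw [this]; ring
    · rw [indicator_of_notMem ht, indicator_of_notMem ht, smul_zero]
  simp_rw [e1]
  rw [integral_indicator measurableSet_Ioc, intervalIntegral.integral_of_le hl.le]
  have hint : Integrable (fun t : ℝ => ((1 - t / l : ℝ) : ℂ) *
        (Complex.exp (t * x * Complex.I) * G (1 + t * Complex.I))) (volume.restrict (Ioc 0 l)) := by
    have : Continuous (fun t : ℝ => ((1 - t / l : ℝ) : ℂ) *
        (Complex.exp (t * x * Complex.I) * G (1 + t * Complex.I))) := by
      have h3 : Continuous (fun t : ℝ => Complex.exp (t * x * Complex.I)) := by fun_prop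
      refine (h3.mul hgc).congr fun t => ?_
      simp only [Pi.mul_apply]
      ring
    exact (this.integrableOn_Icc (a := 0) (b := l)).mono_set Ioc_subset_Icc_self
  have := integral_re hint
  simp only [RCLike.re_to_complex] at this
  rw [← this]
  refine integral_congr_ae (Eventually.of_forall fun t => ?_)
  simp only
  rw [Complex.re_ofReal_mul]

/-! ### The Tauberian argument and the prime number theorem -/

/-- A bounded nonnegative function that cannot decrease faster than `e^{-u}` and whose Fejér means
all tend to `1` must itself tend to `1`. The means are compared with the values of `B` at the ends
of the window `[x - d, x + d]`. -/
lemma fejer_tauberian {B : ℝ → ℝ} (hm : Measurable B) {M : ℝ} (h0 : ∀ u, 0 ≤ B u)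
    (hM : ∀ u, B u ≤ M) (hneg : ∀ u ≤ 0, B u = 0)
    (hslow : ∀ u v, u ≤ v → B u ≤ B v * Real.exp (v - u))
    (H : ∀ l : ℝ, 0 < l →
      Tendsto (fun x => ∫ u in Ioi (0:ℝ), (B u - 1) * fejer l (u - x)) atTop (nhds 0)) :
    Tendsto B atTop (nhds 1) := by
  set c := ∫ v, fejer 1 v with hc
  have hcpos : 0 < c := integral_fejer_pos
  have hM0 : 0 ≤ M := (h0 0).trans (hM 0)
  have hBF : ∀ l, 0 < l → ∀ x, Integrable (fun v => B (x + v) * fejer l v) := by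
    intro l hl x
    refine ((integrable_fejer hl).const_mul M).mono' ?_ (Eventually.of_forall fun v => ?_)
    · have := measurable_fejer l
      exact Measurable.aestronglyMeasurable (by fun_prop)
    · rw [Real.norm_of_nonneg (mul_nonneg (h0 _) (fejer_nonneg hl v))]
      exact mul_le_mul_of_nonneg_right (hM _) (fejer_nonneg hl v)
  have hJ : ∀ l, 0 < l → Tendsto (fun x => ∫ v, B (x + v) * fejer l v) atTop (nhds c) := by
    intro l hl
    have h1 : Tendsto (fun x : ℝ => ∫ v in Ioi (-x), fejer l v) atTop (nhds c) := by
      rw [hc, ← integral_fejer hl]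
      exact (aecover_Ioi tendsto_neg_atTop_atBot).integral_tendsto_of_countably_generated
        (integrable_fejer hl)
    have h2 := (H l hl).add h1
    rw [zero_add] at h2
    refine h2.congr fun x => ?_
    have hF : Integrable (fun u => fejer l (u - x)) := (integrable_fejer hl).comp_sub_right x
    have hBx : Integrable (fun u => B u * fejer l (u - x)) := by
      have := (hBF l hl x).comp_sub_right x
      simpa using this
    have e1 : ∫ v in Ioi (-x), fejer l v = ∫ u in Ioi (0:ℝ), fejer l (u - x) := by
      rw [← integral_indicator measurableSet_Ioi, ← integral_indicator measurableSet_Ioi,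
        ← integral_sub_right_eq_self _ x]
      congr 1; ext u
      simp [indicator]
    have e2 : ∫ v, B (x + v) * fejer l v = ∫ u in Ioi (0:ℝ), B u * fejer l (u - x) := by
      rw [← integral_indicator measurableSet_Ioi, ← integral_sub_right_eq_self _ x]
      congr 1; ext u
      simp only [indicator, mem_Ioi, add_sub_cancel]
      split_ifs with hu
      · rfl
      · rw [hneg u (not_lt.1 hu), zero_mul]
    rw [e1, e2, ← integral_add _ hF.integrableOn]
    · congr 1; ext u; ring
    · refine ((hBx.sub hF).integrableOn (s := Ioi 0)).congr (Eventually.of_forall fun u => ?_)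
      simp only [Pi.sub_apply]
      ring
  have hsplit : ∀ (d : ℝ) (f : ℝ → ℝ), Integrable f →
      ∫ v, f v = (∫ v in {v | d < |v|}, f v) + ∫ v in {v | |v| ≤ d}, f v := by
    intro d f hf
    rw [← integral_add_compl (s := {v : ℝ | d < |v|})
      (measurableSet_lt measurable_const (by fun_prop)) hf]
    congr 3; ext v; simp
  have hmle : ∀ d : ℝ, MeasurableSet {v : ℝ | |v| ≤ d} := fun d =>
    measurableSet_le (by fun_prop) measurable_const
  have hmlt : ∀ d : ℝ, MeasurableSet {v : ℝ | d < |v|} := fun d =>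
    measurableSet_lt measurable_const (by fun_prop)
  have key : ∀ d : ℝ, 0 < d → ∀ᶠ x in atTop,
      B (x - d) * Real.exp (-(2 * d)) * (c - d) ≤ c + d ∧
      c - d ≤ B (x + d) * Real.exp (2 * d) * c + M * d := by
    intro d hd
    -- This choice of `l` makes the mass of the kernel outside `[-d, d]` at most `d`.
    have hl : 0 < 4 / d ^ 2 := by positivity
    set l := 4 / d ^ 2 with hldef
    have htail : ∫ v in {v | d < |v|}, fejer l v ≤ d := by
      refine (integral_fejer_tail hl hd).trans_eq ?_
      rw [hldef]; field_simp
    have hFi := integrable_fejer hl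
    have hcore := hsplit d _ hFi
    rw [integral_fejer hl, ← hc] at hcore
    have htail0 : 0 ≤ ∫ v in {v | d < |v|}, fejer l v :=
      setIntegral_nonneg (hmlt d) fun v _ => fejer_nonneg hl v
    filter_upwards [(hJ l hl).eventually (Ioo_mem_nhds (show c - d < c by linarith)
      (show c < c + d by linarith))] with x hx
    have hs := hsplit d _ (hBF l hl x)
    have ht1 : 0 ≤ ∫ v in {v | d < |v|}, B (x + v) * fejer l v :=
      setIntegral_nonneg (hmlt d) fun v _ => mul_nonneg (h0 _) (fejer_nonneg hl v)
    have ht2 : ∫ v in {v | d < |v|}, B (x + v) * fejer l v ≤ M * d := by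
      calc _ ≤ ∫ v in {v | d < |v|}, M * fejer l v :=
            setIntegral_mono_on (hBF l hl x).integrableOn (hFi.const_mul M).integrableOn (hmlt d)
              fun v _ => mul_le_mul_of_nonneg_right (hM _) (fejer_nonneg hl v)
        _ ≤ _ := by
            rw [integral_const_mul]; gcongr
    constructor
    · have : ∫ v in {v | |v| ≤ d}, B (x - d) * Real.exp (-(2 * d)) * fejer l v ≤
          ∫ v in {v | |v| ≤ d}, B (x + v) * fejer l v := by
        refine setIntegral_mono_on (hFi.const_mul _).integrableOn (hBF l hl x).integrableOn
          (hmle d) fun v hv => mul_le_mul_of_nonneg_right ?_ (fejer_nonneg hl v)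
        have hv := abs_le.1 (Set.mem_ofPred.mp hv)
        have h1 := hslow (x - d) (x + v) (by linarith)
        have h2 : Real.exp (x + v - (x - d)) ≤ Real.exp (2 * d) := Real.exp_le_exp.2 (by linarith)
        rw [Real.exp_neg, ← div_eq_mul_inv, div_le_iff₀ (Real.exp_pos _)]
        exact h1.trans (mul_le_mul_of_nonneg_left h2 (h0 _))
      rw [integral_const_mul] at this
      have h3 : B (x - d) * Real.exp (-(2 * d)) * (c - d) ≤
          B (x - d) * Real.exp (-(2 * d)) * ∫ v in {v | |v| ≤ d}, fejer l v :=
        mul_le_mul_of_nonneg_left (by linarith) (mul_nonneg (h0 _) (Real.exp_pos _).le)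
      linarith [hx.2]
    · have : ∫ v in {v | |v| ≤ d}, B (x + v) * fejer l v ≤
          ∫ v in {v | |v| ≤ d}, B (x + d) * Real.exp (2 * d) * fejer l v := by
        refine setIntegral_mono_on (hBF l hl x).integrableOn (hFi.const_mul _).integrableOn
          (hmle d) fun v hv => mul_le_mul_of_nonneg_right ?_ (fejer_nonneg hl v)
        have hv := abs_le.1 (Set.mem_ofPred.mp hv)
        have h1 := hslow (x + v) (x + d) (by linarith)
        have h2 : Real.exp (x + d - (x + v)) ≤ Real.exp (2 * d) := Real.exp_le_exp.2 (by linarith)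
        exact h1.trans (mul_le_mul_of_nonneg_left h2 (h0 _))
      rw [integral_const_mul] at this
      have h3 : B (x + d) * Real.exp (2 * d) * (∫ v in {v | |v| ≤ d}, fejer l v) ≤
          B (x + d) * Real.exp (2 * d) * c :=
        mul_le_mul_of_nonneg_left (by linarith) (mul_nonneg (h0 _) (Real.exp_pos _).le)
      linarith [hx.1]
  have hpos : ∀ᶠ d : ℝ in nhdsWithin 0 (Ioi 0), 0 < d := self_mem_nhdsWithin
  refine tendsto_order.2 ⟨fun a ha => ?_, fun b hb => ?_⟩
  · have hcont : Continuous (fun d : ℝ => c - d - M * d - a * Real.exp (2 * d) * c) := by fun_prop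
    have hev : ∀ᶠ d : ℝ in nhdsWithin 0 (Ioi 0), 0 < c - d - M * d - a * Real.exp (2 * d) * c := by
      refine (hcont.tendsto 0).mono_left nhdsWithin_le_nhds |>.eventually_const_lt ?_
      simp only [sub_zero, mul_zero, Real.exp_zero, mul_one]
      nlinarith
    obtain ⟨d, hd1, hd⟩ := (hev.and hpos).exists
    have := (tendsto_atTop_add_const_right atTop (-d) tendsto_id).eventually (key d hd)
    filter_upwards [this] with y hy
    simp only [id, neg_add_cancel_right] at hy
    have h1 : a * (Real.exp (2 * d) * c) < B y * (Real.exp (2 * d) * c) := by linarith [hy.2]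
    exact lt_of_mul_lt_mul_right h1 (by positivity)
  · have hcont : Continuous (fun d : ℝ => b * Real.exp (-(2 * d)) * (c - d) - (c + d)) := by
      fun_prop
    have hev : ∀ᶠ d : ℝ in nhdsWithin 0 (Ioi 0),
        0 < b * Real.exp (-(2 * d)) * (c - d) - (c + d) := by
      refine (hcont.tendsto 0).mono_left nhdsWithin_le_nhds |>.eventually_const_lt ?_
      simp only [sub_zero, mul_zero, neg_zero, Real.exp_zero, mul_one, add_zero]
      nlinarith
    have hev2 : ∀ᶠ d : ℝ in nhdsWithin 0 (Ioi 0), d < c :=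
      nhdsWithin_le_nhds (Iio_mem_nhds hcpos)
    obtain ⟨d, ⟨hd1, hdc⟩, hd⟩ := ((hev.and hev2).and hpos).exists
    have := (tendsto_atTop_add_const_right atTop d tendsto_id).eventually (key d hd)
    filter_upwards [this] with y hy
    simp only [id, add_sub_cancel_right] at hy
    have h1 : B y * (Real.exp (-(2 * d)) * (c - d)) < b * (Real.exp (-(2 * d)) * (c - d)) := by
      linarith [hy.1]
    have : 0 < c - d := by linarith
    exact lt_of_mul_lt_mul_right h1 (by positivity)

/-- The normalised Chebyshev function `ψ(e^u) e^{-u}`. -/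
def psiExp (u : ℝ) : ℝ := Chebyshev.psi (Real.exp u) * Real.exp (-u)

lemma psiExp_nonneg (u : ℝ) : 0 ≤ psiExp u :=
  mul_nonneg (Chebyshev.psi_nonneg _) (Real.exp_pos _).le

lemma psiExp_le (u : ℝ) : psiExp u ≤ Real.log 4 + 4 := by
  unfold psiExp
  rw [Real.exp_neg, ← div_eq_mul_inv, div_le_iff₀ (Real.exp_pos _)]
  exact Chebyshev.psi_le_const_mul_self (Real.exp_pos _).le

lemma measurable_psiExp : Measurable psiExp := by
  have := Chebyshev.psi_mono.measurable
  unfold psiExp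
  fun_prop

lemma psiExp_slow (u v : ℝ) (h : u ≤ v) : psiExp u ≤ psiExp v * Real.exp (v - u) := by
  unfold psiExp
  rw [mul_assoc, ← Real.exp_add, show -v + (v - u) = -u by ring]
  exact mul_le_mul_of_nonneg_right (Chebyshev.psi_mono (Real.exp_le_exp.2 h)) (Real.exp_pos _).le

/-- Partial summation and the substitution `t = e^u` express `-ζ'/ζ(1 + w) / (1 + w)` as the
Laplace transform of `psiExp`. -/
lemma LSeries_vonMangoldt_eq_laplace {w : ℂ} (hw : 0 < w.re) :
    LSeries (fun n => (ArithmeticFunction.vonMangoldt n : ℂ)) (1 + w) =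
      (1 + w) * ∫ u in Ioi (0:ℝ), (psiExp u : ℂ) * Complex.exp (-w * u) := by
  rw [LSeries_eq_mul_integral_of_nonneg (fun n => ArithmeticFunction.vonMangoldt n)
    zero_le_one (s := 1 + w) (by simpa using hw) ?_ (fun n => ArithmeticFunction.vonMangoldt_nonneg)]
  · congr 1
    have h := integral_comp_exp_Ioi (fun t : ℝ =>
      (∑ k ∈ Finset.Icc 1 ⌊t⌋₊, (ArithmeticFunction.vonMangoldt k : ℂ)) * (t : ℂ) ^ (-(1 + w + 1))) 0
    rw [Real.exp_zero] at h
    rw [← h]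
    refine integral_congr_ae (Eventually.of_forall fun u => ?_)
    simp only
    have e1 : (∑ k ∈ Finset.Icc 1 ⌊Real.exp u⌋₊, (ArithmeticFunction.vonMangoldt k : ℂ)) =
        (Chebyshev.psi (Real.exp u) : ℂ) := by
      rw [Chebyshev.psi]; push_cast; rfl
    rw [e1, psiExp, Complex.cpow_def_of_ne_zero (by exact_mod_cast (Real.exp_pos u).ne'),
      ← Complex.ofReal_log (Real.exp_pos u).le, Real.log_exp, Complex.real_smul]
    push_cast
    have : Complex.exp u * Complex.exp (u * (-(1 + w + 1))) =
        Complex.exp (-u) * Complex.exp (-w * u) := by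
      rw [← Complex.exp_add, ← Complex.exp_add]; congr 1; ring
    linear_combination (Chebyshev.psi (Real.exp u) : ℂ) * this
  · refine Asymptotics.IsBigO.of_bound (Real.log 4 + 4) (Eventually.of_forall fun n => ?_)
    have e : ∑ k ∈ Finset.Icc 1 n, ArithmeticFunction.vonMangoldt k = Chebyshev.psi n := by
      rw [Chebyshev.psi, Nat.floor_natCast]; rfl
    rw [e, Real.rpow_one, Real.norm_of_nonneg (Chebyshev.psi_nonneg _),
      Real.norm_of_nonneg (Nat.cast_nonneg n)]
    exact Chebyshev.psi_le_const_mul_self (Nat.cast_nonneg n)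

/-- The function `-ζ'/ζ(s) - 1/(s-1)` extends continuously to `Re s ≥ 1`, because `ζ` has no zeros on
`Re s = 1`; this is the case `q = 1` of the corresponding fact for residue classes modulo `q`. -/
lemma exists_continuous_extension : ∃ G : ℂ → ℂ, ContinuousOn G {s | 1 ≤ s.re} ∧
    ∀ s : ℂ, 1 < s.re → G s =
      LSeries (fun n => (ArithmeticFunction.vonMangoldt n : ℂ)) s - 1 / (s - 1) := by
  refine ⟨ArithmeticFunction.vonMangoldt.LFunctionResidueClassAux (q := 1) 1,
    ArithmeticFunction.vonMangoldt.continuousOn_LFunctionResidueClassAux 1, fun s hs => ?_⟩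
  rw [ArithmeticFunction.vonMangoldt.eqOn_LFunctionResidueClassAux isUnit_one hs]
  simp only [Nat.totient_one, Nat.cast_one, inv_one]
  congr 2
  ext n
  rw [ArithmeticFunction.vonMangoldt.residueClass, indicator_of_mem]
  exact Subsingleton.elim _ _

/-- The **prime number theorem** in the form `ψ(x) ∼ x`. -/
theorem tendsto_chebyshev_psi_div : Tendsto (fun x => Chebyshev.psi x / x) atTop (nhds 1) := by
  have hB : Tendsto psiExp atTop (nhds 1) := by
    refine fejer_tauberian measurable_psiExp psiExp_nonneg psiExp_le (fun u hu => ?_)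
      psiExp_slow fun l hl => ?_
    · unfold psiExp
      rw [Chebyshev.psi_eq_zero_of_le_one (Real.exp_le_one_iff.2 hu), zero_mul]
    obtain ⟨G, hGc, hG⟩ := exists_continuous_extension
    have hne : ∀ s : ℂ, 1 ≤ s.re → s ≠ 0 := by
      rintro s hs rfl
      norm_num at hs
    refine tendsto_fejer_transform (h := fun u => psiExp u - 1) (measurable_psiExp.sub_const 1)
      (M := Real.log 4 + 4 + 1) (fun u => ?_) (G := fun s => G s / s - 1 / s)
      ((hGc.div continuousOn_id hne).sub (continuousOn_const.div continuousOn_id hne)) ?_ hl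
    · have := psiExp_nonneg u
      have := psiExp_le u
      rw [abs_le]; constructor <;> linarith
    · intro σ t hσ
      set w : ℂ := σ + t * Complex.I with hw
      have hwre : w.re = σ := by simp [hw]
      have hw0 : w ≠ 0 := by
        intro h; rw [h] at hwre; simp at hwre; linarith
      have h1w : 1 + w ≠ 0 := hne _ (by simp [hwre, hσ.le])
      have e1 : (1 + σ + t * Complex.I : ℂ) = 1 + w := by rw [hw]; ring
      rw [e1, hG (1 + w) (by simp [hwre, hσ]), LSeries_vonMangoldt_eq_laplace (by rwa [hwre])]
      have hexp : IntegrableOn (fun u : ℝ => Complex.exp (-w * u)) (Ioi 0) :=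
        integrableOn_exp_mul_complex_Ioi (by simp [hwre, hσ]) 0
      have hI : ∫ u in Ioi (0:ℝ), Complex.exp (-w * u) = 1 / w := by
        rw [integral_exp_mul_complex_Ioi (by simp [hwre, hσ])]
        simp
      have hP : IntegrableOn (fun u : ℝ => (psiExp u : ℂ) * Complex.exp (-w * u)) (Ioi 0) := by
        refine Integrable.bdd_mul (c := Real.log 4 + 4) hexp ?_ ?_
        · have := measurable_psiExp
          exact Measurable.aestronglyMeasurable (by fun_prop)
        · refine Eventually.of_forall fun u => ?_
          rw [Complex.norm_real, Real.norm_of_nonneg (psiExp_nonneg u)]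
          exact psiExp_le u
      have : ∫ u in Ioi (0:ℝ), ((psiExp u - 1 : ℝ) : ℂ) * Complex.exp (-w * u) =
          (∫ u in Ioi (0:ℝ), (psiExp u : ℂ) * Complex.exp (-w * u)) - 1 / w := by
        rw [← hI, ← integral_sub hP hexp]
        congr 1; ext u; push_cast; ring
      rw [this, add_sub_cancel_left]
      field_simp
      ring
  have := hB.comp Real.tendsto_log_atTop
  refine this.congr' ?_
  filter_upwards [eventually_gt_atTop 0] with x hx
  simp only [Function.comp, psiExp]
  rw [Real.exp_neg, Real.exp_log hx, div_eq_mul_inv]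

/-! ### From `ψ(x) ∼ x` to lattice points in the dilated oval -/

lemma tsum_int_natAbs {k : ℕ → ℝ} {N : ℕ} (hk : ∀ n, n ∉ Finset.Ioc 0 N → k n = 0) :
    ∑' m : ℤ, k m.natAbs = 2 * ∑ n ∈ Finset.Ioc 0 N, k n := by
  have h1 : HasSum k (∑ n ∈ Finset.Ioc 0 N, k n) := hasSum_sum_of_ne_finset_zero hk
  have h2 := HasSum.of_nat_of_neg (f := fun m : ℤ => k m.natAbs) (by simpa using h1)
    (by simpa using h1)
  rw [h2.tsum_eq, Int.natAbs_zero, hk 0 (by simp)]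
  ring

lemma tsum_int_prod_natAbs {K : ℕ → ℕ → ℝ} {N : ℕ}
    (hK : ∀ m n, ¬ (m ∈ Finset.Ioc 0 N ∧ n ∈ Finset.Ioc 0 N) → K m n = 0) :
    ∑' p : ℤ × ℤ, K p.1.natAbs p.2.natAbs =
      4 * ∑ m ∈ Finset.Ioc 0 N, ∑ n ∈ Finset.Ioc 0 N, K m n := by
  have hs : Summable (fun p : ℤ × ℤ => K p.1.natAbs p.2.natAbs) := by
    refine summable_of_ne_finset_zero (s := Finset.Icc (-N : ℤ) N ×ˢ Finset.Icc (-N : ℤ) N) ?_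
    intro p hp
    refine hK _ _ fun h => hp ?_
    simp only [Finset.mem_product, Finset.mem_Icc, Finset.mem_Ioc] at h ⊢
    omega
  rw [hs.tsum_prod]
  have : ∀ m : ℤ, ∑' n : ℤ, K m.natAbs n.natAbs = 2 * ∑ n ∈ Finset.Ioc 0 N, K m.natAbs n :=
    fun m => tsum_int_natAbs (k := K m.natAbs) fun n hn => hK _ _ fun h => hn h.2
  simp_rw [this]
  rw [tsum_int_natAbs (k := fun m => 2 * ∑ n ∈ Finset.Ioc 0 N, K m n) (N := N), ← Finset.mul_sum]
  · ring
  · intro m hm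
    rw [Finset.sum_eq_zero fun n _ => hK _ _ fun h => hm h.1, mul_zero]

lemma tendsto_psi_mul_div {y : ℝ} (hy : 0 ≤ y) :
    Tendsto (fun R => Chebyshev.psi (R * y) / R) atTop (nhds y) := by
  rcases hy.eq_or_lt with rfl | hy
  · simp
  have h := (tendsto_chebyshev_psi_div.comp (tendsto_id.atTop_mul_const hy)).mul_const y
  rw [one_mul] at h
  refine h.congr' ?_
  filter_upwards [eventually_gt_atTop 0] with R hR
  simp only [Function.comp, id]
  field_simp

/-- The sum `∑_{1 ≤ m ≤ R x} Λ(m) ψ(R f(m/R))` of `Λ(m)Λ(n)` over the pairs of positive integers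
with `m ≤ R x` lying under the graph of `f` dilated by `R`. -/
def quadrantSum (f : ℝ → ℝ) (R x : ℝ) : ℝ :=
  ∑ m ∈ Finset.Ioc 0 ⌊R * x⌋₊, ArithmeticFunction.vonMangoldt m * Chebyshev.psi (R * f (m / R))

lemma psi_sub_psi {x y : ℝ} (h : x ≤ y) :
    Chebyshev.psi y - Chebyshev.psi x =
      ∑ m ∈ Finset.Ioc ⌊x⌋₊ ⌊y⌋₊, ArithmeticFunction.vonMangoldt m := by
  rw [sub_eq_iff_eq_add', Chebyshev.psi, Chebyshev.psi,
    Finset.sum_Ioc_consecutive _ (Nat.zero_le _) (Nat.floor_le_floor h)]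

/-- Over one strip `R x < m ≤ R y`, monotonicity of `f` compares the weighted sum with two products
of increments of `ψ`: a rectangle below the graph and a rectangle above it. -/
lemma quadrantSum_step {f : ℝ → ℝ} {a : ℝ} (hf : AntitoneOn f (Icc 0 a)) {R x y : ℝ}
    (hR : 0 < R) (hx : 0 ≤ x) (hxy : x ≤ y) (hya : y ≤ a) :
    (Chebyshev.psi (R * y) - Chebyshev.psi (R * x)) * Chebyshev.psi (R * f y) ≤
        quadrantSum f R y - quadrantSum f R x ∧
      quadrantSum f R y - quadrantSum f R x ≤
        (Chebyshev.psi (R * y) - Chebyshev.psi (R * x)) * Chebyshev.psi (R * f x) := by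
  have hle : R * x ≤ R * y := by gcongr
  have e : quadrantSum f R y - quadrantSum f R x = ∑ m ∈ Finset.Ioc ⌊R * x⌋₊ ⌊R * y⌋₊,
      ArithmeticFunction.vonMangoldt m * Chebyshev.psi (R * f (m / R)) := by
    rw [sub_eq_iff_eq_add', quadrantSum, quadrantSum,
      Finset.sum_Ioc_consecutive _ (Nat.zero_le _) (Nat.floor_le_floor hle)]
  have hmem : ∀ m ∈ Finset.Ioc ⌊R * x⌋₊ ⌊R * y⌋₊, x ≤ (m : ℝ) / R ∧ (m : ℝ) / R ≤ y := by
    intro m hm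
    rw [Finset.mem_Ioc] at hm
    constructor
    · rw [le_div_iff₀ hR, mul_comm]
      exact ((Nat.floor_lt (by positivity)).1 hm.1).le
    · rw [div_le_iff₀ hR, mul_comm]
      exact (Nat.le_floor_iff (mul_nonneg hR.le (hx.trans hxy))).1 hm.2
  rw [e, psi_sub_psi hle, Finset.sum_mul, Finset.sum_mul]
  constructor <;> refine Finset.sum_le_sum fun m hm => mul_le_mul_of_nonneg_left
    (Chebyshev.psi_mono (mul_le_mul_of_nonneg_left ?_ hR.le))
    ArithmeticFunction.vonMangoldt_nonneg
  · obtain ⟨h1, h2⟩ := hmem m hm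
    exact hf ⟨hx.trans h1, h2.trans hya⟩ ⟨hx.trans hxy, hya⟩ h2
  · obtain ⟨h1, h2⟩ := hmem m hm
    exact hf ⟨hx, hxy.trans hya⟩ ⟨hx.trans h1, h2.trans hya⟩ h1

lemma integral_step {f : ℝ → ℝ} {a : ℝ} (hf : AntitoneOn f (Icc 0 a)) {x y : ℝ}
    (hx : 0 ≤ x) (hxy : x ≤ y) (hya : y ≤ a) :
    (y - x) * f y ≤ (∫ t in x..y, f t) ∧ (∫ t in x..y, f t) ≤ (y - x) * f x := by
  have hsub : Icc x y ⊆ Icc 0 a := Icc_subset_Icc hx hya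
  have hi : IntervalIntegrable f volume x y :=
    AntitoneOn.intervalIntegrable (by rw [uIcc_of_le hxy]; exact hf.mono hsub)
  constructor
  · have := intervalIntegral.integral_mono_on hxy (intervalIntegrable_const (c := f y)) hi
      fun t ht => hf (hsub ht) (hsub (right_mem_Icc.2 hxy)) ht.2
    simpa using this
  · have := intervalIntegral.integral_mono_on hxy hi (intervalIntegrable_const (c := f x))
      fun t ht => hf (hsub (left_mem_Icc.2 hxy)) (hsub ht) ht.1
    simpa using this

/-- Both `quadrantSum f R a / R²` (asymptotically) and `∫ f` lie between the lower and upper Riemann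
sums of `f` for the uniform partition into `N` pieces; by monotonicity these differ by
`a (f 0 - f a) / N`. -/
lemma tendsto_quadrantSum {f : ℝ → ℝ} {a : ℝ} (ha : 0 < a) (hf : AntitoneOn f (Icc 0 a))
    (hf0 : ∀ x ∈ Icc 0 a, 0 ≤ f x) :
    Tendsto (fun R => quadrantSum f R a / R ^ 2) atTop (nhds (∫ x in (0:ℝ)..a, f x)) := by
  have main : ∀ N : ℕ, 0 < N → ∀ ε : ℝ, 0 < ε → ∀ᶠ R in atTop,
      |quadrantSum f R a / R ^ 2 - ∫ x in (0:ℝ)..a, f x| < a * (f 0 - f a) / N + ε := by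
    intro N hN ε hε
    have hN' : (0:ℝ) < N := Nat.cast_pos.2 hN
    set x : ℕ → ℝ := fun i => a * i / N with hxdef
    have hx0 : x 0 = 0 := by simp [hxdef]
    have hxN : x N = a := by simp only [hxdef]; field_simp
    have hxnn : ∀ i, 0 ≤ x i := fun i => by positivity
    have hxs : ∀ i, x (i + 1) - x i = a / N := by
      intro i; simp only [hxdef]; push_cast; field_simp; ring
    have hxm : ∀ i, x i ≤ x (i + 1) := fun i => by
      have := hxs i
      have : 0 < a / N := by positivity
      linarith
    have hxa : ∀ i, i ≤ N → x i ≤ a := by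
      intro i hi
      simp only [hxdef]
      rw [div_le_iff₀ hN']
      gcongr
    -- `L` and `U` are the lower and upper Riemann sums of the decreasing function `f`.
    set L : ℝ := ∑ i ∈ Finset.range N, (x (i + 1) - x i) * f (x (i + 1)) with hL
    set U : ℝ := ∑ i ∈ Finset.range N, (x (i + 1) - x i) * f (x i) with hU
    have hint : (∫ t in (0:ℝ)..a, f t) = ∑ i ∈ Finset.range N, ∫ t in x i..x (i + 1), f t := by
      rw [intervalIntegral.sum_integral_adjacent_intervals, hx0, hxN]
      intro k hk
      refine AntitoneOn.intervalIntegrable ?_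
      rw [uIcc_of_le (hxm k)]
      exact hf.mono (Icc_subset_Icc (hxnn k) (hxa _ hk))
    have hLI : L ≤ ∫ t in (0:ℝ)..a, f t := by
      rw [hint]
      exact Finset.sum_le_sum fun i hi =>
        (integral_step hf (hxnn i) (hxm i) (hxa _ (Finset.mem_range.1 hi))).1
    have hIU : (∫ t in (0:ℝ)..a, f t) ≤ U := by
      rw [hint]
      exact Finset.sum_le_sum fun i hi =>
        (integral_step hf (hxnn i) (hxm i) (hxa _ (Finset.mem_range.1 hi))).2
    have hUL : U - L = a * (f 0 - f a) / N := by
      rw [hU, hL, ← Finset.sum_sub_distrib]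
      simp_rw [hxs, ← mul_sub]
      rw [← Finset.mul_sum, Finset.sum_range_sub' (fun i => f (x i)), hx0, hxN]
      ring
    -- `z i` selects the endpoint of the `i`-th piece at which `f` is evaluated.
    have hlim : ∀ z : ℕ → ℕ, (∀ i < N, z i ≤ N) → Tendsto (fun R => ∑ i ∈ Finset.range N,
        (Chebyshev.psi (R * x (i + 1)) / R - Chebyshev.psi (R * x i) / R) *
          (Chebyshev.psi (R * f (x (z i))) / R)) atTop
        (nhds (∑ i ∈ Finset.range N, (x (i + 1) - x i) * f (x (z i)))) := by
      intro z hz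
      refine tendsto_finsetSum _ fun i hi => ?_
      exact ((tendsto_psi_mul_div (hxnn _)).sub (tendsto_psi_mul_div (hxnn _))).mul
        (tendsto_psi_mul_div (hf0 _ ⟨hxnn _, hxa _ (hz i (Finset.mem_range.1 hi))⟩))
    have hlo := (hlim (fun i => i + 1) (fun i hi => hi)).eventually_const_lt
      (show L - ε < _ by simp only [← hL]; linarith)
    have hhi := (hlim (fun i => i) (fun i hi => hi.le)).eventually_lt_const
      (show _ < U + ε by simp only [← hU]; linarith)
    filter_upwards [hlo, hhi, eventually_gt_atTop 0] with R h1 h2 hR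
    have hq : quadrantSum f R a =
        ∑ i ∈ Finset.range N, (quadrantSum f R (x (i + 1)) - quadrantSum f R (x i)) := by
      rw [Finset.sum_range_sub (fun i => quadrantSum f R (x i)), hx0, hxN]
      simp [quadrantSum]
    have b1 : ∑ i ∈ Finset.range N,
        (Chebyshev.psi (R * x (i + 1)) / R - Chebyshev.psi (R * x i) / R) *
          (Chebyshev.psi (R * f (x (i + 1))) / R) ≤ quadrantSum f R a / R ^ 2 := by
      rw [hq, Finset.sum_div]
      refine Finset.sum_le_sum fun i hi => ?_
      rw [← sub_div, div_mul_div_comm, ← sq]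
      gcongr
      exact (quadrantSum_step hf hR (hxnn i) (hxm i) (hxa _ (Finset.mem_range.1 hi))).1
    have b2 : quadrantSum f R a / R ^ 2 ≤ ∑ i ∈ Finset.range N,
        (Chebyshev.psi (R * x (i + 1)) / R - Chebyshev.psi (R * x i) / R) *
          (Chebyshev.psi (R * f (x i)) / R) := by
      rw [hq, Finset.sum_div]
      refine Finset.sum_le_sum fun i hi => ?_
      rw [← sub_div, div_mul_div_comm, ← sq]
      gcongr
      exact (quadrantSum_step hf hR (hxnn i) (hxm i) (hxa _ (Finset.mem_range.1 hi))).2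
    rw [← hUL, abs_lt]
    constructor <;> linarith
  rw [Metric.tendsto_nhds]
  intro ε hε
  have hlim : Tendsto (fun N : ℕ => a * (f 0 - f a) / N) atTop (nhds 0) :=
    tendsto_const_div_atTop_nhds_zero_nat _
  obtain ⟨N, hN, hN0⟩ :=
    ((hlim.eventually_lt_const (half_pos hε)).and (eventually_gt_atTop 0)).exists
  filter_upwards [main N hN0 (ε / 2) (half_pos hε)] with R hR
  rw [Real.dist_eq]
  linarith

namespace SymmetricOval

variable (O : SymmetricOval)

lemma f_nonneg {x : ℝ} (hx : x ∈ Icc 0 O.a) : 0 ≤ O.f x := by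
  rw [← O.f_a]
  exact O.f_anti.antitoneOn hx (right_mem_Icc.2 O.a_pos.le) hx.2

lemma f_le_b {x : ℝ} (hx : x ∈ Icc 0 O.a) : O.f x ≤ O.b := by
  rw [← O.f_zero]
  exact O.f_anti.antitoneOn (left_mem_Icc.2 O.a_pos.le) hx hx.1

lemma mem_smul_region {R : ℝ} (hR : 0 < R) (m n : ℤ) :
    ((m : ℝ), (n : ℝ)) ∈ R • O.region ↔
      (m.natAbs : ℝ) ≤ R * O.a ∧ (n.natAbs : ℝ) ≤ R * O.f (m.natAbs / R) := by
  rw [mem_smul_set_iff_inv_smul_mem₀ hR.ne']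
  simp only [region, Set.mem_ofPred_eq, Prod.smul_mk, smul_eq_mul, abs_mul, abs_inv,
    abs_of_pos hR, Nat.cast_natAbs, Int.cast_abs]
  rw [inv_mul_le_iff₀ hR, inv_mul_le_iff₀ hR, inv_mul_eq_div]

/-- By symmetry, and since `Λ 0 = 0` removes the axes, `ψ_Ω` is four times its open
first-quadrant part. -/
lemma psi_eq_quadrantSum {R : ℝ} (hR : 0 < R) : O.psi R = 4 * quadrantSum O.f R O.a := by
  have ha := O.a_pos
  have hb := O.b_pos
  set K : ℕ → ℕ → ℝ := fun m n => if (m : ℝ) ≤ R * O.a ∧ (n : ℝ) ≤ R * O.f (m / R) then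
    ArithmeticFunction.vonMangoldt m * ArithmeticFunction.vonMangoldt n else 0 with hKdef
  set N : ℕ := ⌊R * O.a⌋₊ + ⌊R * O.b⌋₊ with hN
  have hIcc : ∀ m : ℕ, (m : ℝ) ≤ R * O.a → (m : ℝ) / R ∈ Icc 0 O.a := fun m hm =>
    ⟨by positivity, by rwa [div_le_iff₀ hR, mul_comm]⟩
  have hpsi : O.psi R = ∑' p : ℤ × ℤ, K p.1.natAbs p.2.natAbs := by
    unfold psi
    refine tsum_congr fun p => ?_
    simp only [hKdef, O.mem_smul_region hR]
  rw [hpsi, tsum_int_prod_natAbs (N := N)]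
  · congr 1
    have hsub : Finset.Ioc 0 ⌊R * O.a⌋₊ ⊆ Finset.Ioc 0 N :=
      Finset.Ioc_subset_Ioc_right (by omega)
    rw [quadrantSum, ← Finset.sum_subset hsub]
    · refine Finset.sum_congr rfl fun m hm => ?_
      have hm' : (m : ℝ) ≤ R * O.a :=
        (Nat.le_floor_iff (by positivity)).1 (Finset.mem_Ioc.1 hm).2
      have hy0 : 0 ≤ R * O.f (m / R) := mul_nonneg hR.le (O.f_nonneg (hIcc m hm'))
      have hyb : R * O.f (m / R) ≤ R * O.b :=
        mul_le_mul_of_nonneg_left (O.f_le_b (hIcc m hm')) hR.le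
      have hsub2 : Finset.Ioc 0 ⌊R * O.f (m / R)⌋₊ ⊆ Finset.Ioc 0 N :=
        Finset.Ioc_subset_Ioc_right (by have := Nat.floor_le_floor hyb; omega)
      rw [Chebyshev.psi, Finset.mul_sum, ← Finset.sum_subset hsub2]
      · refine Finset.sum_congr rfl fun n hn => if_pos ⟨hm', ?_⟩
        exact (Nat.le_floor_iff hy0).1 (Finset.mem_Ioc.1 hn).2
      · intro n hn hn'
        refine if_neg fun h => hn' ?_
        rw [Finset.mem_Ioc] at hn ⊢
        exact ⟨hn.1, Nat.le_floor h.2⟩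
    · intro m hm hm'
      refine Finset.sum_eq_zero fun n _ => if_neg fun h => hm' ?_
      rw [Finset.mem_Ioc] at hm ⊢
      exact ⟨hm.1, Nat.le_floor h.1⟩
  · intro m n hmn
    rcases Nat.eq_zero_or_pos m with rfl | hm
    · simp [hKdef]
    rcases Nat.eq_zero_or_pos n with rfl | hn
    · simp [hKdef]
    refine if_neg fun h => hmn ?_
    have h1 := Nat.le_floor h.1
    have h2 := Nat.le_floor
      (h.2.trans (mul_le_mul_of_nonneg_left (O.f_le_b (hIcc m h.1)) hR.le))
    simp only [Finset.mem_Ioc]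
    omega

lemma measurableSet_region : MeasurableSet O.region := by
  have hc : Continuous (fun p : ℝ × ℝ => O.f (min |p.1| O.a)) := by
    refine O.f_cont.comp_continuous (by fun_prop) fun p => ?_
    have := O.a_pos
    exact ⟨by linarith [le_min (abs_nonneg p.1) this.le], min_le_right _ _⟩
  -- `f` is controlled only on `[-a, a]`, so its argument is truncated at `a`.
  have : O.region = {p : ℝ × ℝ | |p.1| ≤ O.a} ∩ {p | |p.2| ≤ O.f (min |p.1| O.a)} := by
    ext p
    simp only [region, Set.mem_ofPred_eq, mem_inter_iff]
    refine and_congr_right fun h => ?_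
    rw [min_eq_left h]
  rw [this]
  exact ((isClosed_le (by fun_prop) continuous_const).inter
    (isClosed_le (by fun_prop) hc)).measurableSet

lemma area_eq : O.area = 4 * ∫ x in (0:ℝ)..O.a, O.f x := by
  set q : ℝ → ℝ := fun r => if r ≤ O.a then 2 * O.f r else 0 with hq
  have hq0 : ∀ x : ℝ, 0 ≤ q |x| := by
    intro x
    simp only [hq]
    split_ifs with h
    · have := O.f_nonneg ⟨abs_nonneg x, h⟩
      positivity
    · exact le_rfl
  have hslice : ∀ x : ℝ, volume (Prod.mk x ⁻¹' O.region) = ENNReal.ofReal (q |x|) := by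
    intro x
    simp only [hq]
    split_ifs with h
    · have : Prod.mk x ⁻¹' O.region = Icc (-O.f |x|) (O.f |x|) := by
        ext y
        simp only [region, mem_preimage, Set.mem_ofPred_eq, mem_Icc, ← abs_le]
        exact and_iff_right h
      rw [this, Real.volume_Icc]
      congr 1; ring
    · have : Prod.mk x ⁻¹' O.region = ∅ := by
        ext y
        simp [region, h]
      rw [this]; simp
  have hmeas : AEStronglyMeasurable (fun x : ℝ => q |x|) volume := by
    have h1 := (measurable_measure_prodMk_left (ν := (volume : Measure ℝ))
      O.measurableSet_region).ennreal_toReal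
    simp_rw [hslice, ENNReal.toReal_ofReal (hq0 _)] at h1
    exact h1.aestronglyMeasurable
  unfold area
  rw [Measure.volume_eq_prod, Measure.prod_apply O.measurableSet_region]
  simp_rw [hslice]
  rw [← integral_eq_lintegral_of_nonneg_ae (Eventually.of_forall hq0) hmeas, integral_comp_abs]
  have : ∫ x in Ioi (0:ℝ), q x = ∫ x in Ioc 0 O.a, 2 * O.f x := by
    rw [← integral_indicator measurableSet_Ioi, ← integral_indicator measurableSet_Ioc]
    congr 1; ext x
    simp only [indicator, mem_Ioi, mem_Ioc, hq]
    split_ifs <;> tauto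
  rw [this, ← intervalIntegral.integral_of_le O.a_pos.le, intervalIntegral.integral_const_mul]
  ring

lemma integral_f_pos : 0 < ∫ x in (0:ℝ)..O.a, O.f x := by
  refine intervalIntegral.intervalIntegral_pos_of_pos_on ?_ (fun x hx => ?_) O.a_pos
  · refine AntitoneOn.intervalIntegrable ?_
    rw [uIcc_of_le O.a_pos.le]
    exact O.f_anti.antitoneOn
  · have := O.f_anti (Ioo_subset_Icc_self hx) (right_mem_Icc.2 O.a_pos.le) hx.2
    rwa [O.f_a] at this

end SymmetricOval

/-- Let `Ω` be a symmetric oval. Then `ψ_Ω(R) ∼ area(Ω)·R²` as `R → ∞`. -/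
theorem psi_asymptotic (O : SymmetricOval) :
    Filter.Tendsto (fun R : ℝ => O.psi R / (O.area * R ^ 2)) Filter.atTop (nhds 1) := by

  have hI := O.integral_f_pos
  have h := (tendsto_quadrantSum O.a_pos O.f_anti.antitoneOn fun x hx => O.f_nonneg hx).div_const
    (∫ x in (0:ℝ)..O.a, O.f x)
  rw [div_self hI.ne'] at h
  refine h.congr' ?_
  filter_upwards [eventually_gt_atTop 0] with R hR
  rw [O.psi_eq_quadrantSum hR, O.area_eq]
  field_simp

end
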